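/- arXiv:2403.20294 — 2 statements merged into one kernel-verified Lean document; each statement's English description precedes it below -/
import Mathlib

section
/- For every s, the weakly s-sparse unobservable set V(s) is a finite subspace arrangement: there exists N ≥ 1 such that V_N(s) = V_{N+1}(s), and for any such N, V_N(s) = V(s); moreover V(s) is a finite union of linear subspaces of ℝ^n. -/
/-!
The sets `V_k(s)` satisfy the recursion `V_0(s) = ℝⁿ`, `V_{k+1}(s) = F (V_k(s))`, where
`F 𝒜` consists of the states from which some `s`-sparse input produces zero output and leads
into `𝒜` (`Vset_succ`). This has three consequences.

* If `V_N(s) = V_{N+1}(s)`, then `V_N(s)` is a fixed point of `F`, so an input that keeps the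
  output zero can be chosen one step at a time forever; hence `V_N(s) ⊆ V(s)`, and the other
  inclusion is immediate (`Vset_eq_weaklyUnobs`).
* `F` preserves finite unions of subspaces: `F (⋃ U_i)` is the union over `i` and over the
  supports `S` with `|S| ≤ s` of subspaces (`IsFSA.stepSet`). So every `V_k(s)` is such a union.
* A decreasing sequence of finite unions of subspaces is eventually constant, because such
  unions are Zariski closed (`mem_of_vanish`) and `ℝ[X_1, …, X_n]` is Noetherian
  (`exists_stable`).
-/

open Matrix BigOperators

namespace SparseInv

variable {n m p : ℕ}

/-- State trajectory of the system `x_{k+1} = A x_k + B u_k` started at `x0`. -/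
def traj (A : Matrix (Fin n) (Fin n) ℝ) (B : Matrix (Fin n) (Fin m) ℝ)
    (x0 : Fin n → ℝ) (u : ℕ → Fin m → ℝ) : ℕ → (Fin n → ℝ)
  | 0 => x0
  | k + 1 => A.mulVec (traj A B x0 u k) + B.mulVec (u k)

/-- Response `γ(x0,u)_k = C x_k + D u_k`. -/
def resp (A : Matrix (Fin n) (Fin n) ℝ) (B : Matrix (Fin n) (Fin m) ℝ)
    (C : Matrix (Fin p) (Fin n) ℝ) (D : Matrix (Fin p) (Fin m) ℝ)
    (x0 : Fin n → ℝ) (u : ℕ → Fin m → ℝ) (k : ℕ) : Fin p → ℝ :=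
  C.mulVec (traj A B x0 u k) + D.mulVec (u k)

/-- `⟨S⟩ = span{e_i : i ∈ S}`, i.e. vectors supported on `S`. -/
def suppSpan (S : Finset (Fin m)) : Set (Fin m → ℝ) := {v | ∀ i ∉ S, v i = 0}

/-- `⟨Δ_s⟩`: the set of `s`-sparse vectors in `ℝ^m`. -/
def sparseVecs (m s : ℕ) : Set (Fin m → ℝ) :=
  ⋃ S ∈ {S : Finset (Fin m) | S.card ≤ s}, suppSpan S

/-- Observability matrix `O_N`. -/
def obsMat (A : Matrix (Fin n) (Fin n) ℝ) (C : Matrix (Fin p) (Fin n) ℝ) (N : ℕ) :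
    Matrix (Fin N × Fin p) (Fin n) ℝ :=
  Matrix.of fun ir j => (C * A ^ (ir.1 : ℕ)) ir.2 j

/-- Controllability matrix `𝒞_N = [A^{N-1}B, …, AB, B]`. -/
def ctrbMat (A : Matrix (Fin n) (Fin n) ℝ) (B : Matrix (Fin n) (Fin m) ℝ) (N : ℕ) :
    Matrix (Fin n) (Fin N × Fin m) ℝ :=
  Matrix.of fun i jc => (A ^ (N - 1 - (jc.1 : ℕ)) * B) i jc.2

/-- Finite response matrix `Γ_N`. -/
def respMat (A : Matrix (Fin n) (Fin n) ℝ) (B : Matrix (Fin n) (Fin m) ℝ)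
    (C : Matrix (Fin p) (Fin n) ℝ) (D : Matrix (Fin p) (Fin m) ℝ) (N : ℕ) :
    Matrix (Fin N × Fin p) (Fin N × Fin m) ℝ :=
  Matrix.of fun ir jc =>
    if (ir.1 : ℕ) = (jc.1 : ℕ) then D ir.2 jc.2
    else if (jc.1 : ℕ) < (ir.1 : ℕ) then
      (C * A ^ ((ir.1 : ℕ) - (jc.1 : ℕ) - 1) * B) ir.2 jc.2
    else 0

/-- `[u]_0^N`, the stacked vector of the first `N` inputs. -/
def stack (N : ℕ) (u : ℕ → Fin m → ℝ) : Fin N × Fin m → ℝ := fun jc => u jc.1 jc.2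

/-- `⟨Δ_s⟩^k` membership for a stacked vector. -/
def blockSparse (k s : ℕ) (w : Fin k × Fin m → ℝ) : Prop :=
  ∀ i : Fin k, (fun c => w (i, c)) ∈ sparseVecs m s

/-- `V_k(s) = O_k^{-1}(Γ_k ⟨Δ_s⟩^k)`. -/
def Vset (A : Matrix (Fin n) (Fin n) ℝ) (B : Matrix (Fin n) (Fin m) ℝ)
    (C : Matrix (Fin p) (Fin n) ℝ) (D : Matrix (Fin p) (Fin m) ℝ) (s k : ℕ) :
    Set (Fin n → ℝ) :=
  {x | ∃ w : Fin k × Fin m → ℝ, blockSparse k s w ∧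
    (obsMat A C k).mulVec x = (respMat A B C D k).mulVec w}

/-- `T_k(s) = 𝒞_k(ker Γ_k ∩ ⟨Δ_s⟩^k)`. -/
def Tset (A : Matrix (Fin n) (Fin n) ℝ) (B : Matrix (Fin n) (Fin m) ℝ)
    (C : Matrix (Fin p) (Fin n) ℝ) (D : Matrix (Fin p) (Fin m) ℝ) (s k : ℕ) :
    Set (Fin n → ℝ) :=
  {x | ∃ w : Fin k × Fin m → ℝ, blockSparse k s w ∧
    (respMat A B C D k).mulVec w = 0 ∧ (ctrbMat A B k).mulVec w = x}

/-- The weakly `s`-sparse unobservable set `V(s)`. -/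
def weaklyUnobs (A : Matrix (Fin n) (Fin n) ℝ) (B : Matrix (Fin n) (Fin m) ℝ)
    (C : Matrix (Fin p) (Fin n) ℝ) (D : Matrix (Fin p) (Fin m) ℝ) (s : ℕ) :
    Set (Fin n → ℝ) :=
  {x | ∃ u : ℕ → Fin m → ℝ, (∀ k, u k ∈ sparseVecs m s) ∧
    ∀ k, resp A B C D x u k = 0}

/-- The strongly `s`-sparse reachable set `T(s)`. -/
def stronglyReach (A : Matrix (Fin n) (Fin n) ℝ) (B : Matrix (Fin n) (Fin m) ℝ)
    (C : Matrix (Fin p) (Fin n) ℝ) (D : Matrix (Fin p) (Fin m) ℝ) (s : ℕ) :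
    Set (Fin n → ℝ) :=
  {x | ∃ (N : ℕ), 1 ≤ N ∧ ∃ u : ℕ → Fin m → ℝ, (∀ k, u k ∈ sparseVecs m s) ∧
    (respMat A B C D N).mulVec (stack N u) = 0 ∧ (ctrbMat A B N).mulVec (stack N u) = x}

/-- Left `s`-sparse invertibility. -/
def leftSparseInv (A : Matrix (Fin n) (Fin n) ℝ) (B : Matrix (Fin n) (Fin m) ℝ)
    (C : Matrix (Fin p) (Fin n) ℝ) (D : Matrix (Fin p) (Fin m) ℝ) (s : ℕ) : Prop :=
  ∀ u u' : ℕ → Fin m → ℝ, (∀ k, u k ∈ sparseVecs m s) → (∀ k, u' k ∈ sparseVecs m s) →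
    (∀ k, resp A B C D 0 u k = resp A B C D 0 u' k) → u = u'

/-- The set map `f_s`. -/
def fmap (A : Matrix (Fin n) (Fin n) ℝ) (B : Matrix (Fin n) (Fin m) ℝ)
    (C : Matrix (Fin p) (Fin n) ℝ) (D : Matrix (Fin p) (Fin m) ℝ) (s : ℕ)
    (𝒜 : Set (Fin n → ℝ)) : Set (Fin n → ℝ) :=
  {x ∈ 𝒜 | ∃ u ∈ sparseVecs m s,
    C.mulVec x + D.mulVec u = 0 ∧ A.mulVec x + B.mulVec u ∈ 𝒜}

/-- Finite subspace arrangement. -/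
def IsFSA {V : Type*} [AddCommGroup V] [Module ℝ V] (𝒜 : Set V) : Prop :=
  ∃ (c : ℕ) (U : Fin c → Submodule ℝ V), 𝒜 = ⋃ i, (U i : Set V)

/-- Block-column selection `Γ_S` of the finite response matrix. -/
def respSel (A : Matrix (Fin n) (Fin n) ℝ) (B : Matrix (Fin n) (Fin m) ℝ)
    (C : Matrix (Fin p) (Fin n) ℝ) (D : Matrix (Fin p) (Fin m) ℝ) (N : ℕ)
    (S : Fin N → Finset (Fin m)) :
    Matrix (Fin N × Fin p) ((i : Fin N) × {j // j ∈ S i}) ℝ :=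
  Matrix.of fun ir jc => respMat A B C D N ir (jc.1, (jc.2 : Fin m))

/-- Block-column selection `𝒞_S` of the controllability matrix. -/
def ctrbSel (A : Matrix (Fin n) (Fin n) ℝ) (B : Matrix (Fin n) (Fin m) ℝ) (N : ℕ)
    (S : Fin N → Finset (Fin m)) :
    Matrix (Fin n) ((i : Fin N) × {j // j ∈ S i}) ℝ :=
  Matrix.of fun i jc => ctrbMat A B N i (jc.1, (jc.2 : Fin m))

/-- Inputs with `τ`-periodic `s`-sparse supports, `U_τ(s)`. -/
def periodicSparse (m τ s : ℕ) : Set (ℕ → Fin m → ℝ) :=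
  {u | ∃ S : ℕ → Finset (Fin m), (∀ k, (S k).card ≤ s) ∧ (∀ k, S (k + τ) = S k) ∧
    ∀ k, u k ∈ suppSpan (S k)}

/-- Left invertibility over an input class `𝒰`. -/
def leftUInv (A : Matrix (Fin n) (Fin n) ℝ) (B : Matrix (Fin n) (Fin m) ℝ)
    (C : Matrix (Fin p) (Fin n) ℝ) (D : Matrix (Fin p) (Fin m) ℝ)
    (𝒰 : Set (ℕ → Fin m → ℝ)) : Prop :=
  ∀ u ∈ 𝒰, ∀ u' ∈ 𝒰, (∀ k, resp A B C D 0 u k = resp A B C D 0 u' k) → u = u'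

/-! ### Trajectories and the recursion for `V_k(s)` -/

lemma traj_succ' (A : Matrix (Fin n) (Fin n) ℝ) (B : Matrix (Fin n) (Fin m) ℝ)
    (x : Fin n → ℝ) (u : ℕ → Fin m → ℝ) (k : ℕ) :
    traj A B x u (k + 1) = traj A B (A *ᵥ x + B *ᵥ u 0) (fun i => u (i + 1)) k := by
  induction k with
  | zero => rfl
  | succ k ih => rw [traj, ih, traj]

lemma resp_succ' (A : Matrix (Fin n) (Fin n) ℝ) (B : Matrix (Fin n) (Fin m) ℝ)
    (C : Matrix (Fin p) (Fin n) ℝ) (D : Matrix (Fin p) (Fin m) ℝ)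
    (x : Fin n → ℝ) (u : ℕ → Fin m → ℝ) (k : ℕ) :
    resp A B C D x u (k + 1) =
      resp A B C D (A *ᵥ x + B *ᵥ u 0) (fun i => u (i + 1)) k := by
  rw [resp, traj_succ', resp]

lemma traj_eq_sum (A : Matrix (Fin n) (Fin n) ℝ) (B : Matrix (Fin n) (Fin m) ℝ)
    (x : Fin n → ℝ) (u : ℕ → Fin m → ℝ) (k : ℕ) :
    traj A B x u k =
      (A ^ k) *ᵥ x + ∑ j ∈ Finset.range k, (A ^ (k - j - 1) * B) *ᵥ u j := by
  induction k with
  | zero => simp [traj]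
  | succ k ih =>
    rw [traj, ih, Finset.sum_range_succ, mulVec_add, mulVec_mulVec, ← pow_succ',
      mulVec_sum, add_assoc]
    congr 2
    · refine Finset.sum_congr rfl fun j hj => ?_
      have hj' := Finset.mem_range.1 hj
      rw [mulVec_mulVec, ← Matrix.mul_assoc, ← pow_succ']
      congr 3
      omega
    · simp

/-- The matrix form `O_N x + Γ_N [u]_0^N` of the first `N` outputs. -/
lemma obsMat_add_respMat (A : Matrix (Fin n) (Fin n) ℝ) (B : Matrix (Fin n) (Fin m) ℝ)
    (C : Matrix (Fin p) (Fin n) ℝ) (D : Matrix (Fin p) (Fin m) ℝ)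
    (x : Fin n → ℝ) (u : ℕ → Fin m → ℝ) (N : ℕ) (i : Fin N) (r : Fin p) :
    (obsMat A C N *ᵥ x) (i, r) + (respMat A B C D N *ᵥ stack N u) (i, r) =
      resp A B C D x u i r := by
  have h1 : (obsMat A C N *ᵥ x) (i, r) = (C *ᵥ ((A ^ (i : ℕ)) *ᵥ x)) r := by
    rw [mulVec_mulVec]; rfl
  have h2 : (respMat A B C D N *ᵥ stack N u) (i, r) =
      ∑ j ∈ Finset.range N, ((if (i : ℕ) = j then (D *ᵥ u j) r else 0) +
        (if j < (i : ℕ) then ((C * A ^ ((i : ℕ) - j - 1) * B) *ᵥ u j) r else 0)) := by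
    rw [← Fin.sum_univ_eq_sum_range (fun j : ℕ => ((if (i : ℕ) = j then (D *ᵥ u j) r else 0) +
        (if j < (i : ℕ) then ((C * A ^ ((i : ℕ) - j - 1) * B) *ᵥ u j) r else 0))) N]
    simp only [mulVec, dotProduct, Fintype.sum_prod_type]
    refine Finset.sum_congr rfl fun j _ => ?_
    simp only [respMat, stack, Matrix.of_apply]
    rcases lt_trichotomy (i : ℕ) (j : ℕ) with h | h | h
    · simp [h.ne, h.not_gt]
    · simp [h]
    · simp [h.ne', h]
  have h3 : (Finset.range N).filter (fun j => j < (i : ℕ)) = Finset.range i := by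
    ext j
    have := i.2
    simp only [Finset.mem_filter, Finset.mem_range]
    omega
  rw [h1, h2, Finset.sum_add_distrib, Finset.sum_ite_eq, if_pos (Finset.mem_range.2 i.2),
    ← Finset.sum_filter, h3, resp, traj_eq_sum, mulVec_add, mulVec_sum]
  simp only [Pi.add_apply, Finset.sum_apply, mulVec_mulVec, Matrix.mul_assoc]
  ring

lemma neg_mem_sparseVecs {s : ℕ} {v : Fin m → ℝ} (h : v ∈ sparseVecs m s) :
    -v ∈ sparseVecs m s := by
  simp only [sparseVecs, Set.mem_iUnion, suppSpan, Set.mem_ofPred_eq] at h ⊢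
  obtain ⟨S, hS, hv⟩ := h
  exact ⟨S, hS, fun i hi => by simp [hv i hi]⟩

lemma zero_mem_sparseVecs (s : ℕ) : (0 : Fin m → ℝ) ∈ sparseVecs m s := by
  simp only [sparseVecs, Set.mem_iUnion, suppSpan, Set.mem_ofPred_eq]
  exact ⟨∅, by simp, fun _ _ => rfl⟩

lemma mem_Vset_iff (A : Matrix (Fin n) (Fin n) ℝ) (B : Matrix (Fin n) (Fin m) ℝ)
    (C : Matrix (Fin p) (Fin n) ℝ) (D : Matrix (Fin p) (Fin m) ℝ) (s k : ℕ)
    (x : Fin n → ℝ) :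
    x ∈ Vset A B C D s k ↔ ∃ u : ℕ → Fin m → ℝ, (∀ i, u i ∈ sparseVecs m s) ∧
      ∀ i < k, resp A B C D x u i = 0 := by
  constructor
  · rintro ⟨w, hw, h⟩
    -- `O_k x = Γ_k w` has the opposite sign convention to `O_k x + Γ_k u = 0`.
    set u : ℕ → Fin m → ℝ := fun i => if hi : i < k then -(fun c => w (⟨i, hi⟩, c)) else 0
      with hu
    have hst : stack k u = -w := by
      ext ⟨i, c⟩
      simp [stack, hu]
    refine ⟨u, fun i => ?_, fun i hi => ?_⟩
    · by_cases hi : i < k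
      · simpa only [hu, dif_pos hi] using neg_mem_sparseVecs (hw ⟨i, hi⟩)
      · simpa only [hu, dif_neg hi] using zero_mem_sparseVecs s
    · ext r
      have := obsMat_add_respMat A B C D x u k ⟨i, hi⟩ r
      rw [hst, mulVec_neg, h] at this
      simpa using this.symm
  · rintro ⟨u, hu, h⟩
    refine ⟨-stack k u, fun i => neg_mem_sparseVecs (hu i), ?_⟩
    ext ⟨i, r⟩
    have := obsMat_add_respMat A B C D x u k i r
    rw [h i i.2] at this
    rw [mulVec_neg]
    exact eq_neg_of_add_eq_zero_left this

/-- The states from which some `s`-sparse input produces zero output and leads into `𝒜`.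
Unlike `fmap`, it does not require the initial state to lie in `𝒜`. -/
def stepSet (A : Matrix (Fin n) (Fin n) ℝ) (B : Matrix (Fin n) (Fin m) ℝ)
    (C : Matrix (Fin p) (Fin n) ℝ) (D : Matrix (Fin p) (Fin m) ℝ) (s : ℕ)
    (𝒜 : Set (Fin n → ℝ)) : Set (Fin n → ℝ) :=
  {x | ∃ v ∈ sparseVecs m s, C *ᵥ x + D *ᵥ v = 0 ∧ A *ᵥ x + B *ᵥ v ∈ 𝒜}

lemma Vset_zero (A : Matrix (Fin n) (Fin n) ℝ) (B : Matrix (Fin n) (Fin m) ℝ)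
    (C : Matrix (Fin p) (Fin n) ℝ) (D : Matrix (Fin p) (Fin m) ℝ) (s : ℕ) :
    Vset A B C D s 0 = Set.univ := by
  ext x
  rw [mem_Vset_iff]
  simpa using ⟨fun _ => 0, fun _ => zero_mem_sparseVecs s⟩

lemma Vset_succ (A : Matrix (Fin n) (Fin n) ℝ) (B : Matrix (Fin n) (Fin m) ℝ)
    (C : Matrix (Fin p) (Fin n) ℝ) (D : Matrix (Fin p) (Fin m) ℝ) (s k : ℕ) :
    Vset A B C D s (k + 1) = stepSet A B C D s (Vset A B C D s k) := by
  ext x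
  simp only [stepSet, Set.mem_ofPred_eq, mem_Vset_iff]
  constructor
  · rintro ⟨u, hu, h⟩
    refine ⟨u 0, hu 0, h 0 k.succ_pos, fun i => u (i + 1), fun i => hu _, fun i hi => ?_⟩
    rw [← resp_succ']
    exact h _ (by omega)
  · rintro ⟨v, hv, h0, u, hu, h⟩
    refine ⟨fun i => Nat.casesOn i v u, fun i => ?_, fun i hi => ?_⟩
    · cases i
      · exact hv
      · exact hu _
    · cases i with
      | zero => exact h0
      | succ i =>
        rw [resp_succ']
        exact h i (by omega)

lemma Vset_antitone (A : Matrix (Fin n) (Fin n) ℝ) (B : Matrix (Fin n) (Fin m) ℝ)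
    (C : Matrix (Fin p) (Fin n) ℝ) (D : Matrix (Fin p) (Fin m) ℝ) (s : ℕ) :
    Antitone (Vset A B C D s) := by
  intro k l hkl x
  simp only [mem_Vset_iff]
  rintro ⟨u, hu, h⟩
  exact ⟨u, hu, fun i hi => h i (by omega)⟩

lemma Vset_eq_weaklyUnobs (A : Matrix (Fin n) (Fin n) ℝ) (B : Matrix (Fin n) (Fin m) ℝ)
    (C : Matrix (Fin p) (Fin n) ℝ) (D : Matrix (Fin p) (Fin m) ℝ) (s N : ℕ)
    (hN : Vset A B C D s N = Vset A B C D s (N + 1)) :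
    Vset A B C D s N = weaklyUnobs A B C D s := by
  apply Set.Subset.antisymm
  · intro x hx
    have hstep : ∀ y : Vset A B C D s N, ∃ v ∈ sparseVecs m s,
        C *ᵥ y.1 + D *ᵥ v = 0 ∧ A *ᵥ y.1 + B *ᵥ v ∈ Vset A B C D s N := by
      rintro ⟨y, hy⟩
      rw [hN, Vset_succ] at hy
      exact hy
    choose f hf hf0 hfV using hstep
    let z : ℕ → Vset A B C D s N := fun k =>
      Nat.rec ⟨x, hx⟩ (fun _ y => ⟨A *ᵥ y.1 + B *ᵥ f y, hfV y⟩) k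
    have hz : ∀ k, traj A B x (fun k => f (z k)) k = (z k).1 := by
      intro k
      induction k with
      | zero => rfl
      | succ k ih => rw [traj, ih]
    refine ⟨fun k => f (z k), fun k => hf _, fun k => ?_⟩
    rw [resp, hz]
    exact hf0 _
  · rintro x ⟨u, hu, h⟩
    exact (mem_Vset_iff ..).2 ⟨u, hu, fun i _ => h i⟩

/-! ### Finite subspace arrangements -/

lemma isFSA_iUnion {V : Type*} [AddCommGroup V] [Module ℝ V] {ι : Type*} [Finite ι]
    (U : ι → Submodule ℝ V) : IsFSA (⋃ i, (U i : Set V)) := by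
  obtain ⟨c, ⟨e⟩⟩ := Finite.exists_equiv_fin ι
  exact ⟨c, fun i => U (e.symm i),
    (e.symm.surjective.iUnion_comp fun i => (U i : Set V)).symm⟩

/-- For a fixed support `S`, the states driven into the subspace `U` with zero output by an
input supported on `S`. -/
def stepSubmodule (A : Matrix (Fin n) (Fin n) ℝ) (B : Matrix (Fin n) (Fin m) ℝ)
    (C : Matrix (Fin p) (Fin n) ℝ) (D : Matrix (Fin p) (Fin m) ℝ) (S : Finset (Fin m))
    (U : Submodule ℝ (Fin n → ℝ)) : Submodule ℝ (Fin n → ℝ) where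
  carrier := {x | ∃ v ∈ suppSpan S, C *ᵥ x + D *ᵥ v = 0 ∧ A *ᵥ x + B *ᵥ v ∈ U}
  zero_mem' := ⟨0, fun _ _ => rfl, by simp, by simp⟩
  add_mem' := by
    rintro x y ⟨v, hv, h0, h1⟩ ⟨w, hw, h2, h3⟩
    refine ⟨v + w, fun i hi => by simp [hv i hi, hw i hi], ?_, ?_⟩
    · rw [mulVec_add, mulVec_add, add_add_add_comm, h0, h2, add_zero]
    · rw [mulVec_add, mulVec_add, add_add_add_comm]
      exact U.add_mem h1 h3
  smul_mem' := by
    rintro c x ⟨v, hv, h0, h1⟩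
    refine ⟨c • v, fun i hi => by simp [hv i hi], ?_, ?_⟩
    · rw [mulVec_smul, mulVec_smul, ← smul_add, h0, smul_zero]
    · rw [mulVec_smul, mulVec_smul, ← smul_add]
      exact U.smul_mem c h1

lemma IsFSA.stepSet (A : Matrix (Fin n) (Fin n) ℝ) (B : Matrix (Fin n) (Fin m) ℝ)
    (C : Matrix (Fin p) (Fin n) ℝ) (D : Matrix (Fin p) (Fin m) ℝ) (s : ℕ)
    {𝒜 : Set (Fin n → ℝ)} (h : IsFSA 𝒜) : IsFSA (stepSet A B C D s 𝒜) := by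
  obtain ⟨c, U, rfl⟩ := h
  have key : SparseInv.stepSet A B C D s (⋃ i, (U i : Set (Fin n → ℝ))) =
      ⋃ q : {S : Finset (Fin m) // S.card ≤ s} × Fin c,
        (stepSubmodule A B C D q.1.1 (U q.2) : Set (Fin n → ℝ)) := by
    ext x
    simp only [SparseInv.stepSet, sparseVecs, Set.mem_iUnion, Set.mem_ofPred_eq]
    constructor
    · rintro ⟨v, ⟨S, hS, hv⟩, h0, i, hi⟩
      exact ⟨(⟨S, hS⟩, i), v, hv, h0, hi⟩
    · rintro ⟨⟨⟨S, hS⟩, i⟩, v, hv, h0, hi⟩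
      exact ⟨v, ⟨S, hS, hv⟩, h0, i, hi⟩
  rw [key]
  exact isFSA_iUnion _

lemma isFSA_Vset (A : Matrix (Fin n) (Fin n) ℝ) (B : Matrix (Fin n) (Fin m) ℝ)
    (C : Matrix (Fin p) (Fin n) ℝ) (D : Matrix (Fin p) (Fin m) ℝ) (s k : ℕ) :
    IsFSA (Vset A B C D s k) := by
  induction k with
  | zero => exact ⟨1, fun _ => ⊤, by simp [Vset_zero, Set.iUnion_const]⟩
  | succ k ih => rw [Vset_succ]; exact ih.stepSet A B C D s

/-- A finite union of subspaces is Zariski closed: a point outside it is separated from it by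
a product of linear forms, one for each subspace. -/
lemma mem_of_vanish {𝒜 : Set (Fin n → ℝ)} (h : IsFSA 𝒜) {x : Fin n → ℝ}
    (hx : ∀ f ∈ MvPolynomial.vanishingIdeal ℝ 𝒜, MvPolynomial.aeval x f = 0) : x ∈ 𝒜 := by
  obtain ⟨c, U, rfl⟩ := h
  by_contra hmem
  simp only [Set.mem_iUnion, not_exists, SetLike.mem_coe] at hmem
  choose l hl hlU using fun i => Submodule.exists_le_ker_of_notMem (hmem i)
  let P : Fin c → MvPolynomial (Fin n) ℝ := fun i =>
    ∑ j, MvPolynomial.C (l i (Pi.single j 1)) * MvPolynomial.X j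
  have hP : ∀ i y, MvPolynomial.aeval y (P i) = l i y := by
    intro i y
    rw [LinearMap.pi_apply_eq_sum_univ (l i) y]
    simp only [P, map_sum, map_mul, MvPolynomial.aeval_C, MvPolynomial.aeval_X,
      smul_eq_mul, Algebra.algebraMap_self, RingHom.id_apply]
    refine Finset.sum_congr rfl fun j _ => ?_
    rw [mul_comm]
    congr 2
    ext a
    simp [Pi.single_apply, eq_comm]
  have hprod : MvPolynomial.aeval x (∏ i, P i) ≠ 0 := by
    rw [map_prod]
    exact Finset.prod_ne_zero_iff.2 fun i _ => by rw [hP]; exact hl i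
  refine hprod (hx _ fun y hy => ?_)
  obtain ⟨i, hi⟩ := Set.mem_iUnion.1 hy
  rw [map_prod]
  exact Finset.prod_eq_zero (Finset.mem_univ i) (by rw [hP]; exact hlU i hi)

lemma exists_stable {V : ℕ → Set (Fin n → ℝ)} (hV : Antitone V) (h : ∀ k, IsFSA (V k)) :
    ∃ N, ∀ k, N ≤ k → V N = V k := by
  let I : ℕ →o Ideal (MvPolynomial (Fin n) ℝ) :=
    ⟨fun k => MvPolynomial.vanishingIdeal ℝ (V k), fun _ _ hkl _ hf x hx => hf x (hV hkl hx)⟩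
  obtain ⟨N, hN⟩ := monotone_stabilizes_iff_noetherian.2 inferInstance I
  refine ⟨N, fun k hk => Set.Subset.antisymm (fun x hx => ?_) (hV hk)⟩
  refine mem_of_vanish (h k) fun f hf => ?_
  have hI : MvPolynomial.vanishingIdeal ℝ (V N) = MvPolynomial.vanishingIdeal ℝ (V k) := hN k hk
  rw [← hI] at hf
  exact hf x hx

/-- Proposition 1: `V(s)` is a finite subspace arrangement: the sequence `V_k(s)`
stabilizes at some `N ≥ 1`, any such stabilization point equals `V(s)`, and `V(s)`
is a finite union of linear subspaces. -/
theorem weaklyUnobs_isFSA (n m p : ℕ)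
    (A : Matrix (Fin n) (Fin n) ℝ) (B : Matrix (Fin n) (Fin m) ℝ)
    (C : Matrix (Fin p) (Fin n) ℝ) (D : Matrix (Fin p) (Fin m) ℝ) (s : ℕ) :
    (∃ N : ℕ, 1 ≤ N ∧ Vset A B C D s N = Vset A B C D s (N + 1)) ∧
    (∀ N : ℕ, 1 ≤ N → Vset A B C D s N = Vset A B C D s (N + 1) →
      Vset A B C D s N = weaklyUnobs A B C D s) ∧
    IsFSA (weaklyUnobs A B C D s) := by
  obtain ⟨N, hN⟩ := exists_stable (Vset_antitone A B C D s) (isFSA_Vset A B C D s)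
  refine ⟨⟨N + 1, by omega, ?_⟩, fun N _ h => Vset_eq_weaklyUnobs A B C D s N h, ?_⟩
  · rw [← hN (N + 1) (by omega), ← hN (N + 1 + 1) (by omega)]
  · rw [← Vset_eq_weaklyUnobs A B C D s N (hN (N + 1) (by omega))]
    exact isFSA_Vset A B C D s N

end SparseInv
end

section
/- If there exists a tuple of supports S ∈ Δ_{2s}^τ such that the stacked matrix [𝒞_S; Γ_S] (the block-column-selected controllability matrix stacked on the block-column-selected finite response matrix) does not have full column rank, then Σ is not left U_τ(s)-invertible. -/
/-!
A nonzero kernel vector of the stacked matrix `[𝒞_S; Γ_S]`, extended by zero off the selected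
columns and from time `τ` on, is a nonzero input `d` (`exists_ker_of_rank_ne`, `select_mulVec`).
Since `Γ_τ` computes the outputs at times `0, …, τ - 1` and `𝒞_τ` the state at time `τ`
(`respMat_mulVec_stack`, `ctrbMat_mulVec_stack`), the output of `d` vanishes before `τ` and the
state is back at `0` at time `τ`, where it stays; hence the output is identically zero
(`resp_eq_zero`). Splitting each `S i`, which has at most `2 s` elements, into two disjoint parts of
size at most `s` writes `d` as a difference of two inputs with `τ`-periodic `s`-sparse supports.
By linearity these are distinct inputs with the same output.
-/

open Matrix BigOperators

namespace SparseInv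

variable {n m p : ℕ}

/-- Unrolled state recursion from the zero state. -/
lemma traj_zero_eq_sum (A : Matrix (Fin n) (Fin n) ℝ) (B : Matrix (Fin n) (Fin m) ℝ)
    (u : ℕ → Fin m → ℝ) (k : ℕ) :
    traj A B 0 u k = ∑ j ∈ Finset.range k, (A ^ (k - 1 - j) * B) *ᵥ u j := by
  induction k with
  | zero => simp [traj]
  | succ k ih =>
    rw [traj, ih, Finset.sum_range_succ, Matrix.mulVec_sum]
    congr 1
    · refine Finset.sum_congr rfl fun j hj => ?_
      have hj' := Finset.mem_range.mp hj
      rw [Matrix.mulVec_mulVec, ← Matrix.mul_assoc, ← pow_succ']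
      congr 3
      omega
    · simp

lemma traj_sub (A : Matrix (Fin n) (Fin n) ℝ) (B : Matrix (Fin n) (Fin m) ℝ)
    (u u' : ℕ → Fin m → ℝ) (k : ℕ) :
    traj A B 0 (u - u') k = traj A B 0 u k - traj A B 0 u' k := by
  simp only [traj_zero_eq_sum, Pi.sub_apply, Matrix.mulVec_sub, Finset.sum_sub_distrib]

lemma resp_sub (A : Matrix (Fin n) (Fin n) ℝ) (B : Matrix (Fin n) (Fin m) ℝ)
    (C : Matrix (Fin p) (Fin n) ℝ) (D : Matrix (Fin p) (Fin m) ℝ)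
    (u u' : ℕ → Fin m → ℝ) (k : ℕ) :
    resp A B C D 0 (u - u') k = resp A B C D 0 u k - resp A B C D 0 u' k := by
  simp only [resp, traj_sub, Pi.sub_apply, Matrix.mulVec_sub]
  abel

/-- The controllability matrix maps stacked inputs to the state reached from `0`. -/
lemma ctrbMat_mulVec_stack (A : Matrix (Fin n) (Fin n) ℝ) (B : Matrix (Fin n) (Fin m) ℝ)
    (u : ℕ → Fin m → ℝ) (N : ℕ) :
    ctrbMat A B N *ᵥ stack N u = traj A B 0 u N := by
  funext i
  rw [traj_zero_eq_sum, Finset.sum_apply,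
    ← Fin.sum_univ_eq_sum_range (fun j => ((A ^ (N - 1 - j) * B) *ᵥ u j) i)]
  simp only [Matrix.mulVec, dotProduct, Fintype.sum_prod_type, ctrbMat, stack, Matrix.of_apply]

/-- The finite response matrix maps stacked inputs to the stacked zero-state outputs. -/
lemma respMat_mulVec_stack (A : Matrix (Fin n) (Fin n) ℝ) (B : Matrix (Fin n) (Fin m) ℝ)
    (C : Matrix (Fin p) (Fin n) ℝ) (D : Matrix (Fin p) (Fin m) ℝ)
    (u : ℕ → Fin m → ℝ) (N : ℕ) (i : Fin N) (r : Fin p) :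
    (respMat A B C D N *ᵥ stack N u) (i, r) = resp A B C D 0 u i r := by
  have h1 : (respMat A B C D N *ᵥ stack N u) (i, r) =
      ∑ j : Fin N, (if (i : ℕ) = (j : ℕ) then (D *ᵥ u j) r
        else if (j : ℕ) < (i : ℕ) then ((C * A ^ ((i : ℕ) - j - 1) * B) *ᵥ u j) r
        else 0) := by
    simp only [Matrix.mulVec, dotProduct, Fintype.sum_prod_type, respMat, stack, Matrix.of_apply]
    refine Finset.sum_congr rfl fun j _ => ?_
    split_ifs <;> simp
  rw [h1, Fin.sum_univ_eq_sum_range (fun j => if (i : ℕ) = j then (D *ᵥ u j) r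
        else if j < (i : ℕ) then ((C * A ^ ((i : ℕ) - j - 1) * B) *ᵥ u j) r else 0)]
  -- Columns strictly after time `i` contribute nothing, so only times `0, …, i` remain.
  rw [← Finset.sum_subset (Finset.range_mono (Nat.succ_le_of_lt i.isLt)), Nat.succ_eq_add_one,
    Finset.sum_range_succ, resp, traj_zero_eq_sum, Matrix.mulVec_sum, Pi.add_apply,
    Finset.sum_apply]
  · congr 1
    · refine Finset.sum_congr rfl fun j hj => ?_
      have hj' := Finset.mem_range.mp hj
      rw [if_neg (by omega), if_pos hj', Matrix.mulVec_mulVec, ← Matrix.mul_assoc,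
        Nat.sub_right_comm]
    · simp
  · intro j _ hj
    have hj' : ¬ j < (i : ℕ) + 1 := by simpa using hj
    rw [if_neg (by omega), if_neg (by omega)]

/-- Selecting block columns amounts to multiplying by a vector that vanishes off the selection. -/
lemma select_mulVec {R : Type*} {N : ℕ} (M : Matrix R (Fin N × Fin m) ℝ)
    (S : Fin N → Finset (Fin m)) (v : ((i : Fin N) × {j // j ∈ S i}) → ℝ)
    (w : Fin N × Fin m → ℝ) (hw : ∀ i, ∀ c ∉ S i, w (i, c) = 0)
    (hv : ∀ jc, w (jc.1, (jc.2 : Fin m)) = v jc) :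
    (Matrix.of fun r (jc : (i : Fin N) × {j // j ∈ S i}) => M r (jc.1, (jc.2 : Fin m))) *ᵥ v
      = M *ᵥ w := by
  funext r
  simp only [Matrix.mulVec, dotProduct, Fintype.sum_prod_type, Fintype.sum_sigma,
    Matrix.of_apply, ← hv]
  refine Finset.sum_congr rfl fun i _ => ?_
  rw [← Finset.sum_subset (Finset.subset_univ (S i))
    (fun c _ hc => by rw [hw i c hc, mul_zero])]
  exact Finset.sum_coe_sort (S i) (fun c => M r (i, c) * w (i, c))

/-- By rank-nullity, a matrix without full column rank kills a nonzero vector. -/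
lemma exists_ker_of_rank_ne {R K : Type*} [Fintype R] [Fintype K]
    (M : Matrix R K ℝ) (h : M.rank ≠ Fintype.card K) : ∃ v ≠ 0, M *ᵥ v = 0 := by
  by_contra! hc
  refine h ?_
  have hinj : Function.Injective M.mulVecLin := by
    rw [← LinearMap.ker_eq_bot, LinearMap.ker_eq_bot']
    intro v hv
    by_contra hne
    exact hc v hne hv
  rw [Matrix.rank, LinearMap.finrank_range_of_inj hinj, Module.finrank_fintype_fun_eq_card]

/-- An input that vanishes from time `τ` on, keeps the output at zero before `τ` and steers the
state back to `0` at time `τ` has zero output for all times. -/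
lemma resp_eq_zero (A : Matrix (Fin n) (Fin n) ℝ) (B : Matrix (Fin n) (Fin m) ℝ)
    (C : Matrix (Fin p) (Fin n) ℝ) (D : Matrix (Fin p) (Fin m) ℝ) (τ : ℕ)
    (d : ℕ → Fin m → ℝ) (hd : ∀ k, τ ≤ k → d k = 0)
    (hC : ctrbMat A B τ *ᵥ stack τ d = 0) (hR : respMat A B C D τ *ᵥ stack τ d = 0) (k : ℕ) :
    resp A B C D 0 d k = 0 := by
  rcases lt_or_ge k τ with hk | hk
  · funext r
    rw [← respMat_mulVec_stack A B C D d τ ⟨k, hk⟩ r, hR]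
    rfl
  · have ht : traj A B 0 d k = 0 := by
      induction k, hk using Nat.le_induction with
      | base => rw [← ctrbMat_mulVec_stack, hC]
      | succ k hk ih => rw [traj, ih, hd k hk]; simp
    rw [resp, ht, hd k hk]
    simp

/-- Lemma 2: if some support tuple `S ∈ Δ_{2s}^τ` makes `[𝒞_S; Γ_S]` column-rank
deficient, then `Σ` is not left `U_τ(s)`-invertible. -/
theorem not_leftUInv_of_rank_deficient (n m p : ℕ)
    (A : Matrix (Fin n) (Fin n) ℝ) (B : Matrix (Fin n) (Fin m) ℝ)
    (C : Matrix (Fin p) (Fin n) ℝ) (D : Matrix (Fin p) (Fin m) ℝ) (s τ : ℕ)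
    (hτ : 1 ≤ τ)
    (hS : ∃ S : Fin τ → Finset (Fin m), (∀ i, (S i).card ≤ 2 * s) ∧
      (Matrix.fromRows (ctrbSel A B τ S) (respSel A B C D τ S)).rank ≠
        ∑ i : Fin τ, (S i).card) :
    ¬ leftUInv A B C D (periodicSparse m τ s) := by
  obtain ⟨S, hcard, hrank⟩ := hS
  obtain ⟨v, hv0, hv⟩ := exists_ker_of_rank_ne
    (Matrix.fromRows (ctrbSel A B τ S) (respSel A B C D τ S))
    (by simpa [Fintype.card_sigma] using hrank)
  rw [Matrix.fromRows_mulVec] at hv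
  -- `d` is the kernel vector read as an input on `0, …, τ - 1`, extended by zero in time.
  let d : ℕ → Fin m → ℝ := fun k c =>
    if h : ∃ hk : k < τ, c ∈ S ⟨k, hk⟩ then v ⟨⟨k, h.1⟩, ⟨c, h.2⟩⟩ else 0
  have hdS : ∀ i : Fin τ, ∀ c ∉ S i, d i c = 0 := by
    intro i c hc
    exact dif_neg fun h => hc h.2
  have hdv : ∀ jc : (i : Fin τ) × {j // j ∈ S i}, d jc.1 jc.2 = v jc := by
    rintro ⟨i, c, hc⟩
    exact dif_pos ⟨i.isLt, hc⟩
  have hdτ : ∀ k, τ ≤ k → d k = 0 := by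
    intro k hk
    funext c
    exact dif_neg fun h => absurd h.1 (not_lt.mpr hk)
  have hC : ctrbMat A B τ *ᵥ stack τ d = 0 := by
    rw [← select_mulVec (ctrbMat A B τ) S v (stack τ d) hdS hdv]
    funext i
    exact congrFun hv (Sum.inl i)
  have hR : respMat A B C D τ *ᵥ stack τ d = 0 := by
    rw [← select_mulVec (respMat A B C D τ) S v (stack τ d) hdS hdv]
    funext i
    exact congrFun hv (Sum.inr i)
  have hsplit : ∀ i, ∃ T ⊆ S i, T.card ≤ s ∧ (S i \ T).card ≤ s := by
    intro i
    obtain ⟨T, hT, hTc⟩ := Finset.exists_subset_card_eq (s := S i) (n := min s (S i).card)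
      (min_le_right _ _)
    refine ⟨T, hT, by omega, ?_⟩
    have := hcard i
    rw [Finset.card_sdiff_of_subset hT]
    omega
  choose T hTS hTc hTc' using hsplit
  let π : ℕ → Fin τ := fun k => ⟨k % τ, Nat.mod_lt k hτ⟩
  have hπ : ∀ k, π (k + τ) = π k := fun k => by simp [π]
  -- `u` is the part of `d` on `T`, and `u - d` is supported on `S \ T`.
  let u : ℕ → Fin m → ℝ := fun k c => if c ∈ T (π k) then d k c else 0
  have hu : u ∈ periodicSparse m τ s :=
    ⟨fun k => T (π k), fun k => hTc _, fun k => by simp only [hπ], fun k c hc => if_neg hc⟩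
  have hu' : u - d ∈ periodicSparse m τ s := by
    refine ⟨fun k => S (π k) \ T (π k), fun k => hTc' _, fun k => by simp only [hπ], ?_⟩
    intro k c hc
    by_cases hcT : c ∈ T (π k)
    · simp [u, hcT]
    · have hcS : c ∉ S (π k) := fun h => hc (Finset.mem_sdiff.mpr ⟨h, hcT⟩)
      have hd0 : d k c = 0 := by
        rcases lt_or_ge k τ with hk | hk
        · have hπk : π k = ⟨k, hk⟩ := Fin.ext (Nat.mod_eq_of_lt hk)
          rw [hπk] at hcS
          exact hdS ⟨k, hk⟩ c hcS
        · rw [hdτ k hk]; rfl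
      simp [u, hcT, hd0]
  intro hinv
  have heq : u = u - d := hinv u hu (u - d) hu' fun k => by
    rw [resp_sub, resp_eq_zero A B C D τ d hdτ hC hR k, sub_zero]
  have hd0 : d = 0 := sub_eq_self.mp heq.symm
  refine hv0 (funext fun jc => ?_)
  rw [← hdv jc, hd0]
  rfl

end SparseInv
end
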